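/- (Failure of the Forward-Jump objective in the counterexample MDP: a non-injective encoder is consistent with all accessible inverse kinematics examples.) In the counterexample MDP, let ψ : S → {−1, 1} be the non-injective projection ψ(x, b) = b, and for k ≥ 1, s, s' ∈ S and a ∈ A let N_k(s, s', a) = #{(a_1, …, a_k) ∈ A^k : apply(s, (a_1, …, a_k)) = s' and a_1 = a} and N_k(s, s') = N_k(s, s', 1) + N_k(s, s', −1). Then for every k with k = 1 or k ≥ 4 and all s, s' with N_k(s, s') > 0, the ratio N_k(s, s', a) / N_k(s, s') depends only on (k, a, ψ(s')): for k = 1 it equals 1 if a = ψ(s') and 0 otherwise, and for k ≥ 4 it equals 1/2 for both actions. Hence all inverse kinematics examples with k = 1 or k ≥ 4 — the only examples accessible to the Forward-Jump objective when the state is only decodable from 3 steps of history — are consistent with the encoder ψ that merges all four values of the first (cyclic) coordinate. -/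

import Mathlib

/-!
For `k ≥ 3` (in particular `k ≥ 4`), negating the first two actions of a sequence changes the
cyclic coordinate by `0` or `±4`, hence by nothing modulo `4`, and leaves the last action alone.
This involution (`flipTwo`) therefore preserves the end state while exchanging the two possible
first actions, so `N_k(s, s', 1) = N_k(s, s', -1)` and the ratio is `1/2`.
For `k = 1` the unique action is recorded in the second coordinate of `s'`.
-/

/-- The action set `A = {-1, 1} ⊆ ℤ` of the counterexample MDP. -/
abbrev Act : Type := {a : ℤ // a = 1 ∨ a = -1}

instance : Fintype Act :=
  Fintype.subtype ({1, -1} : Finset ℤ) (by intro x; simp)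

/-- The action `1`. -/
def act1 : Act := ⟨1, Or.inl rfl⟩

/-- The action `-1`. -/
def actm1 : Act := ⟨-1, Or.inr rfl⟩

/-- The agent-centric state space `S = (ZMod 4) × {-1, 1}` of the counterexample MDP:
a 4-cycle position together with a record of the most recent action. -/
abbrev CState : Type := ZMod 4 × Act

/-- The deterministic transition map `step((x, b), a) = ((x + a) mod 4, a)`. -/
def stepCE (s : CState) (a : Act) : CState := (s.1 + (a.val : ZMod 4), a)

/-- Apply a finite sequence of actions in order. -/
def applyCE (s : CState) (l : List Act) : CState := l.foldl stepCE s

/-- `Nk k s s' a`: the number of action sequences of length `k` leading from `s`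
to `s'` whose first action is `a`. -/
def Nk (k : ℕ) (s s' : CState) (a : Act) : ℕ :=
  (Finset.univ.filter
    (fun v : Fin k → Act =>
      applyCE s (List.ofFn v) = s' ∧ (List.ofFn v).head? = some a)).card

/-- The non-injective encoder `ψ(x, b) = b` merging all four values of the cyclic
coordinate. -/
def ψCE (s : CState) : Act := s.2

/-- The opposite action. -/
def flipAct (a : Act) : Act := ⟨-a.val, by rcases a.2 with h | h <;> simp [h]⟩

lemma flipAct_flipAct (a : Act) : flipAct (flipAct a) = a := Subtype.ext (neg_neg a.val)

lemma act_cases (a : Act) : a = act1 ∨ a = actm1 :=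
  a.2.imp (fun h => Subtype.ext h) (fun h => Subtype.ext h)

/-- Negate the first two actions of a sequence, leaving the others unchanged. -/
def flipTwo {k : ℕ} (v : Fin k → Act) (i : Fin k) : Act :=
  if i.val < 2 then flipAct (v i) else v i

lemma flipTwo_flipTwo {k : ℕ} (v : Fin k → Act) : flipTwo (flipTwo v) = v := by
  funext i
  by_cases h : i.val < 2 <;> simp [flipTwo, h, flipAct_flipAct]

/-- Negating two actions shifts the position by `0` or `±4`; the third action `c` erases the
record of the second one. -/
lemma step_flip_flip (s : CState) (a b c : Act) :
    stepCE (stepCE (stepCE s (flipAct a)) (flipAct b)) c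
      = stepCE (stepCE (stepCE s a) b) c := by
  have h : ((-a.val : ℤ) : ZMod 4) + ((-b.val : ℤ) : ZMod 4)
      = (a.val : ZMod 4) + (b.val : ZMod 4) := by
    rcases act_cases a with rfl | rfl <;> rcases act_cases b with rfl | rfl <;> decide
  simp only [stepCE, flipAct, add_assoc s.1, h]

lemma apply_flipTwo {n : ℕ} (s : CState) (v : Fin (n + 3) → Act) :
    applyCE s (List.ofFn (flipTwo v)) = applyCE s (List.ofFn v) := by
  simp [applyCE, List.ofFn_succ, flipTwo, step_flip_flip]

lemma head_flipTwo {n : ℕ} (v : Fin (n + 3) → Act) (a : Act)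
    (h : (List.ofFn v).head? = some a) :
    (List.ofFn (flipTwo v)).head? = some (flipAct a) := by
  simp only [List.ofFn_succ, List.head?_cons, Option.some.injEq] at h ⊢
  simp [flipTwo, h]

lemma Nk_flip (n : ℕ) (s s' : CState) (a : Act) :
    Nk (n + 3) s s' a = Nk (n + 3) s s' (flipAct a) := by
  refine Finset.card_nbij' flipTwo flipTwo ?_ ?_
    (fun v _ => flipTwo_flipTwo v) (fun v _ => flipTwo_flipTwo v)
  · intro v hv
    simp only [Finset.coe_filter, Finset.mem_univ, true_and, Set.mem_ofPred_eq] at hv ⊢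
    exact ⟨(apply_flipTwo s v).trans hv.1, head_flipTwo v a hv.2⟩
  · intro v hv
    simp only [Finset.coe_filter, Finset.mem_univ, true_and, Set.mem_ofPred_eq] at hv ⊢
    refine ⟨(apply_flipTwo s v).trans hv.1, ?_⟩
    simpa only [flipAct_flipAct] using head_flipTwo v _ hv.2

/-- A one-step path records its only action in the end state. -/
lemma Nk_one_eq_zero (s s' : CState) (a : Act) (h : a ≠ ψCE s') : Nk 1 s s' a = 0 := by
  refine Finset.card_eq_zero.2 (Finset.filter_eq_empty_iff.2 ?_)
  rintro v - ⟨h1, h2⟩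
  simp only [List.ofFn_succ, List.ofFn_zero, List.head?_cons, Option.some.injEq] at h1 h2
  apply h
  rw [← h1, ← h2]
  rfl

/-- **Failure of the Forward-Jump objective in the counterexample MDP: a non-injective
encoder is consistent with all accessible inverse kinematics examples.**
For every `k` with `k = 1` or `k ≥ 4` — the only gaps accessible to the Forward-Jump
objective when the state is only decodable from 3 steps of history — and all `s, s'`
with `N_k(s, s') > 0`, the ratio `N_k(s, s', a) / N_k(s, s')` depends only on
`(k, a, ψ(s'))`: for `k = 1` it is the indicator of `a = ψ(s')`, and for `k ≥ 4` it is
`1/2` for both actions. -/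
theorem fj_counterexample_nonInjective_encoder_consistent
    (k : ℕ) (hk : k = 1 ∨ 4 ≤ k) (s s' : CState) (a : Act)
    (hpos : 0 < Nk k s s' act1 + Nk k s s' actm1) :
    (Nk k s s' a : ℝ) / ((Nk k s s' act1 + Nk k s s' actm1 : ℕ) : ℝ)
      = if k = 1 then (if a = ψCE s' then 1 else 0) else 1 / 2 := by
  have hne : ((Nk k s s' act1 + Nk k s s' actm1 : ℕ) : ℝ) ≠ 0 := by exact_mod_cast hpos.ne'
  rcases hk with rfl | hk
  · rw [if_pos rfl]
    by_cases h : a = ψCE s'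
    · rw [if_pos h, div_eq_one_iff_eq hne, Nat.cast_inj]
      rcases act_cases a with rfl | rfl
      · rw [Nk_one_eq_zero s s' actm1 (h ▸ by decide), add_zero]
      · rw [Nk_one_eq_zero s s' act1 (h ▸ by decide), zero_add]
    · rw [if_neg h, Nk_one_eq_zero s s' a h, Nat.cast_zero, zero_div]
  · obtain ⟨n, rfl⟩ : ∃ n, k = n + 3 := ⟨k - 3, by omega⟩
    have heq : Nk (n + 3) s s' act1 = Nk (n + 3) s s' actm1 := Nk_flip n s s' act1
    have ha : Nk (n + 3) s s' a = Nk (n + 3) s s' actm1 := by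
      rcases act_cases a with rfl | rfl
      · exact heq
      · rfl
    rw [if_neg (by omega), div_eq_div_iff hne two_ne_zero, ha, heq]
    push_cast
    ring
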